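/- Let p ∈ ℕ, R > 0, c ≠ 0, and let W be either the weight W_{[-R,R]} or W = cosh(·/R). The truncated Fourier operator 𝓕_c : L²(W^{⊗p}) → L²([-1,1]^p), f ↦ 𝓕[f](c·)|_{[-1,1]^p}, is injective and has dense range: the closure in L²([-1,1]^p) of {𝓕[f](c·)|_{[-1,1]^p} : f ∈ L²(W^{⊗p})} is all of L²([-1,1]^p). (This is equivalent to the statement that the two families of singular functions of 𝓕_c form complete orthonormal systems of L²([-1,1]^p) and L²(W^{⊗p}) respectively.) -/

import Mathlib

open MeasureTheory Set
open scoped ENNReal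

/-- The Fourier transform on `ℝ^p` with the paper's convention
`𝓕[f](x) = ∫ e^{i b·x} f(b) db`. -/
noncomputable def paperFourierP (p : ℕ) (f : (Fin p → ℝ) → ℂ) (x : Fin p → ℝ) : ℂ :=
  ∫ b : Fin p → ℝ, Complex.exp (Complex.I * ((∑ j, b j * x j : ℝ) : ℂ)) * f b

/-- The weight `W_{[-R,R]}`, equal to `1` on `[-R,R]` and `+∞` outside. -/
noncomputable def boxWeight (R : ℝ) : ℝ → ℝ≥0∞ := fun b => if |b| ≤ R then 1 else ⊤

/-- The weight `cosh (·/R)`. -/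
noncomputable def coshWeight (R : ℝ) : ℝ → ℝ≥0∞ := fun b => ENNReal.ofReal (Real.cosh (b / R))

/-- `s(b) = ∑ |b_j|`. -/
noncomputable def absSum {p : ℕ} (b : Fin p → ℝ) : ℝ := ∑ j, |b j|

lemma absSum_nonneg {p : ℕ} (b : Fin p → ℝ) : 0 ≤ absSum b :=
  Finset.sum_nonneg fun _ _ => abs_nonneg _

lemma continuous_absSum {p : ℕ} : Continuous (absSum (p := p)) := by
  unfold absSum; fun_prop

lemma abs_dot_le {p : ℕ} (b x : Fin p → ℝ) :
    |∑ j, b j * x j| ≤ (1 + ∑ j, |x j|) * absSum b := by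
  calc |∑ j, b j * x j| ≤ ∑ j, |b j * x j| := Finset.abs_sum_le_sum_abs _ _
    _ ≤ ∑ j, (1 + ∑ k, |x k|) * |b j| := by
        refine Finset.sum_le_sum fun j _ => ?_
        rw [abs_mul, mul_comm]
        have : |x j| ≤ ∑ k, |x k| :=
          Finset.single_le_sum (f := fun k => |x k|) (fun _ _ => abs_nonneg _) (Finset.mem_univ j)
        exact mul_le_mul_of_nonneg_right (by linarith) (abs_nonneg _)
    _ = _ := by rw [absSum, Finset.mul_sum]

lemma integrable_exp_neg_abs {a : ℝ} (ha : 0 < a) :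
    Integrable (fun x : ℝ => Real.exp (-a * |x|)) := by
  rw [← integrableOn_univ, ← Set.Iic_union_Ioi (a := (0:ℝ))]
  refine IntegrableOn.union ?_ ?_
  · refine (integrableOn_exp_mul_Iic ha 0).congr_fun (fun x hx => ?_) measurableSet_Iic
    simp only [abs_of_nonpos (show x ≤ 0 from hx)]; congr 1; ring
  · refine (integrableOn_exp_mul_Ioi (a := -a) (by linarith) 0).congr_fun (fun x hx => ?_)
      measurableSet_Ioi
    simp only [abs_of_pos (show 0 < x from hx)]

lemma integrable_exp_neg_absSum {p : ℕ} {a : ℝ} (ha : 0 < a) :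
    Integrable (fun b : Fin p → ℝ => Real.exp (-a * absSum b)) := by
  have := Integrable.fintype_prod (μ := fun _ : Fin p => (volume : Measure ℝ))
    (f := fun _ x => Real.exp (-a * |x|)) (fun _ => integrable_exp_neg_abs ha)
  refine this.congr (Filter.Eventually.of_forall fun b => ?_)
  simp only [absSum, ← Real.exp_sum, Finset.mul_sum]

lemma weight_lower {R : ℝ} (hR : 0 < R) {W : ℝ → ℝ≥0∞} (hW : W = boxWeight R ∨ W = coshWeight R)
    (x : ℝ) : ENNReal.ofReal (Real.exp (|x| / R)) ≤ ENNReal.ofReal (Real.exp 1) * W x := by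
  rcases hW with rfl | rfl
  · unfold boxWeight
    split_ifs with h
    · rw [mul_one]
      apply ENNReal.ofReal_le_ofReal
      rw [Real.exp_le_exp, div_le_one hR]; exact h
    · rw [ENNReal.mul_top (by simp [Real.exp_pos])]; exact le_top
  · unfold coshWeight
    rw [← ENNReal.ofReal_mul (Real.exp_pos _).le]
    apply ENNReal.ofReal_le_ofReal
    have h1 : Real.exp (|x| / R) ≤ 2 * Real.cosh (x / R) := by
      rw [← Real.cosh_abs, abs_div, abs_of_pos hR, Real.cosh_eq]
      have := Real.exp_pos (-(|x| / R)); linarith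
    have h2 : (2:ℝ) ≤ Real.exp 1 := by
      have := Real.add_one_le_exp (1:ℝ); linarith
    have := Real.cosh_pos (x / R)
    nlinarith

lemma expWeight_integrable {p : ℕ} {R : ℝ} (hR : 0 < R) {W : ℝ → ℝ≥0∞}
    (hW : W = boxWeight R ∨ W = coshWeight R) {f : (Fin p → ℝ) → ℂ}
    (hf : AEStronglyMeasurable f volume)
    (hfi : (∫⁻ b : Fin p → ℝ, (‖f b‖₊ : ℝ≥0∞) ^ 2 * ∏ j, W (b j)) < ⊤) :
    Integrable (fun b => Real.exp (1 / (4 * R) * absSum b) * ‖f b‖) := by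
  set δ := 1 / (4 * R) with hδ
  have hδ0 : 0 < δ := by positivity
  have h4 : 4 * δ = 1 / R := by rw [hδ]; field_simp
  refine ⟨(by have := continuous_absSum (p := p); fun_prop : Continuous fun b : Fin p → ℝ =>
    Real.exp (δ * absSum b)).aestronglyMeasurable.mul hf.norm, ?_⟩
  rw [hasFiniteIntegral_iff_ofReal (Filter.Eventually.of_forall fun b => by positivity)]
  have key : ∀ b : Fin p → ℝ, ENNReal.ofReal (Real.exp (δ * absSum b) * ‖f b‖) ≤
      ENNReal.ofReal (Real.exp (-(2 * δ) * absSum b)) +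
        ENNReal.ofReal (Real.exp 1) ^ p * ((‖f b‖₊ : ℝ≥0∞) ^ 2 * ∏ j, W (b j)) := by
    intro b
    have h1 : Real.exp (δ * absSum b) * ‖f b‖ ≤ Real.exp (-(2 * δ) * absSum b) +
        ‖f b‖ ^ 2 * Real.exp (4 * δ * absSum b) := by
      have e1 : Real.exp (-(2 * δ) * absSum b) = Real.exp (-δ * absSum b) ^ 2 := by
        rw [← Real.exp_nat_mul]; congr 1; push_cast; ring
      have e2 : Real.exp (4 * δ * absSum b) = Real.exp (2 * δ * absSum b) ^ 2 := by
        rw [← Real.exp_nat_mul]; congr 1; push_cast; ring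
      have e3 : Real.exp (δ * absSum b) = Real.exp (-δ * absSum b) * Real.exp (2 * δ * absSum b) := by
        rw [← Real.exp_add]; congr 1; ring
      rw [e1, e2, e3]
      nlinarith [sq_nonneg (Real.exp (-δ * absSum b) - ‖f b‖ * Real.exp (2 * δ * absSum b)),
        sq_nonneg (Real.exp (-δ * absSum b)), sq_nonneg (‖f b‖ * Real.exp (2 * δ * absSum b))]
    have h2 : ENNReal.ofReal (Real.exp (4 * δ * absSum b)) ≤
        ENNReal.ofReal (Real.exp 1) ^ p * ∏ j, W (b j) := by
      have : Real.exp (4 * δ * absSum b) = ∏ j, Real.exp (|b j| / R) := by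
        rw [← Real.exp_sum, h4, absSum, Finset.mul_sum]; congr 1
        exact Finset.sum_congr rfl fun j _ => by ring
      rw [this, ENNReal.ofReal_prod_of_nonneg fun _ _ => (Real.exp_pos _).le]
      calc _ ≤ ∏ j, (ENNReal.ofReal (Real.exp 1) * W (b j)) :=
            Finset.prod_le_prod' fun j _ => weight_lower hR hW (b j)
        _ = _ := by rw [Finset.prod_mul_distrib]; simp
    calc _ ≤ _ := ENNReal.ofReal_le_ofReal h1
      _ = ENNReal.ofReal (Real.exp (-(2 * δ) * absSum b)) +
        (‖f b‖₊ : ℝ≥0∞) ^ 2 * ENNReal.ofReal (Real.exp (4 * δ * absSum b)) := by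
          rw [ENNReal.ofReal_add (by positivity) (by positivity),
            ENNReal.ofReal_mul (by positivity), ENNReal.ofReal_pow (by positivity),
            ofReal_norm]; rfl
      _ ≤ _ := by
          rw [mul_left_comm]; gcongr
  refine (lintegral_mono key).trans_lt ?_
  have hI := integrable_exp_neg_absSum (p := p) (a := 2 * δ) (by positivity)
  rw [lintegral_add_left' hI.1.aemeasurable.ennreal_ofReal,
    lintegral_const_mul' _ _ (by simp)]
  refine ENNReal.add_lt_top.2 ⟨?_, ENNReal.mul_lt_top (by simp) hfi⟩
  exact (hasFiniteIntegral_iff_ofReal (Filter.Eventually.of_forall fun b => by positivity)).1 hI.2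

lemma integrable_of_exp {p : ℕ} {δ : ℝ} (hδ : 0 < δ) {h : (Fin p → ℝ) → ℂ}
    (hm : AEStronglyMeasurable h volume)
    (hi : Integrable (fun b => Real.exp (δ * absSum b) * ‖h b‖)) : Integrable h := by
  refine hi.mono' hm (Filter.Eventually.of_forall fun b => ?_)
  have : 1 ≤ Real.exp (δ * absSum b) := Real.one_le_exp (mul_nonneg hδ.le (absSum_nonneg b))
  nlinarith [norm_nonneg (h b)]

lemma norm_char {p : ℕ} (b x : Fin p → ℝ) :
    ‖Complex.exp (Complex.I * ((∑ j, b j * x j : ℝ) : ℂ))‖ = 1 := by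
  rw [mul_comm]; exact Complex.norm_exp_ofReal_mul_I _

lemma char_mul_integrable {p : ℕ} {h : (Fin p → ℝ) → ℂ} (hi : Integrable h) (x : Fin p → ℝ) :
    Integrable (fun b => Complex.exp (Complex.I * ((∑ j, b j * x j : ℝ) : ℂ)) * h b) := by
  refine hi.bdd_mul (c := 1) (Continuous.aestronglyMeasurable (by fun_prop))
    (Filter.Eventually.of_forall fun b => (norm_char b x).le)

lemma paperFourierP_continuous {p : ℕ} {h : (Fin p → ℝ) → ℂ} (hi : Integrable h) :
    Continuous (paperFourierP p h) := by
  refine continuous_of_dominated (bound := fun b => ‖h b‖)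
    (fun x => (char_mul_integrable hi x).1) (fun x => Filter.Eventually.of_forall fun b => ?_)
    hi.norm (Filter.Eventually.of_forall fun b => by fun_prop)
  rw [norm_mul, norm_char, one_mul]

lemma norm_paperFourierP_le {p : ℕ} (h : (Fin p → ℝ) → ℂ) (x : Fin p → ℝ) :
    ‖paperFourierP p h x‖ ≤ ∫ b, ‖h b‖ := by
  refine (norm_integral_le_integral_norm _).trans_eq (integral_congr_ae ?_)
  refine Filter.Eventually.of_forall fun b => ?_
  simp only [norm_mul, norm_char, one_mul]

/-- Uniqueness of the Fourier transform, real case. -/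
lemma fourier_unique_real {p : ℕ} {h : (Fin p → ℝ) → ℝ} (hi : Integrable h)
    (h0 : ∀ x, paperFourierP p (fun b => (h b : ℂ)) x = 0) : h =ᵐ[volume] 0 := by
  set f1 : (Fin p → ℝ) → ℝ≥0∞ := fun b => ENNReal.ofReal (h b)
  set f2 : (Fin p → ℝ) → ℝ≥0∞ := fun b => ENNReal.ofReal (-h b)
  have m1 : AEMeasurable f1 volume := hi.1.aemeasurable.ennreal_ofReal
  have m2 : AEMeasurable f2 volume := hi.1.aemeasurable.neg.ennreal_ofReal
  have : IsFiniteMeasure (volume.withDensity f1) := isFiniteMeasure_withDensity_ofReal hi.2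
  have : IsFiniteMeasure (volume.withDensity f2) := isFiniteMeasure_withDensity_ofReal hi.neg.2
  have heq : (volume.withDensity f1) = (volume.withDensity f2) := by
    apply Measure.ext_of_charFunDual
    funext L
    rw [charFunDual_apply, charFunDual_apply,
      integral_withDensity_eq_integral_toReal_smul₀ m1 (by simp [f1]),
      integral_withDensity_eq_integral_toReal_smul₀ m2 (by simp [f2]), ← sub_eq_zero]
    have hL : ∀ b : Fin p → ℝ, L b = ∑ j, b j * L (Pi.single j 1) := by
      intro b
      conv_lhs => rw [← Finset.univ_sum_single b, map_sum]
      refine Finset.sum_congr rfl fun j _ => ?_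
      rw [show Pi.single j (b j) = b j • (Pi.single j (1:ℝ) : Fin p → ℝ) by
        rw [← Pi.single_smul]; simp, map_smul, smul_eq_mul]
    have hb : ∀ k : (Fin p → ℝ) → ℝ, Integrable k →
        Integrable (fun b => k b • Complex.exp (L b * Complex.I)) := by
      intro k hk
      refine (char_mul_integrable hk.ofReal (fun j => L (Pi.single j 1))).congr
        (Filter.Eventually.of_forall fun b => ?_)
      simp only [Complex.real_smul]
      rw [hL b, mul_comm Complex.I, mul_comm]; rfl
    rw [← integral_sub, ← h0 (fun j => L (Pi.single j 1))]
    · refine integral_congr_ae (Filter.Eventually.of_forall fun b => ?_)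
      simp only [f1, f2, Complex.real_smul, ENNReal.toReal_ofReal']
      rw [hL b, mul_comm Complex.I, ← sub_mul, mul_comm]
      congr 1
      rcases le_total 0 (h b) with h' | h'
      · rw [max_eq_left h', max_eq_right (by linarith)]; simp
      · rw [max_eq_right h', max_eq_left (by linarith)]; simp
    · refine hb _ (hi.pos_part.congr (Filter.Eventually.of_forall fun b => ?_))
      simp [f1, ENNReal.toReal_ofReal']
    · refine hb _ (hi.neg.pos_part.congr (Filter.Eventually.of_forall fun b => ?_))
      simp [f2, ENNReal.toReal_ofReal']
  have := (withDensity_eq_iff_of_sigmaFinite m1 m2).1 heq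
  filter_upwards [this] with b hb
  simp only [f1, f2] at hb
  rcases le_total 0 (h b) with h' | h'
  · rw [ENNReal.ofReal_of_nonpos (by linarith : -h b ≤ 0), ENNReal.ofReal_eq_zero] at hb
    exact le_antisymm hb h'
  · rw [ENNReal.ofReal_of_nonpos h', eq_comm, ENNReal.ofReal_eq_zero] at hb
    exact le_antisymm h' (neg_nonpos.1 hb)

lemma fourier_unique {p : ℕ} {h : (Fin p → ℝ) → ℂ} (hi : Integrable h)
    (h0 : ∀ x, paperFourierP p h x = 0) : h =ᵐ[volume] 0 := by
  have hconj : ∀ x, paperFourierP p (fun b => (starRingEnd ℂ) (h b)) x = 0 := by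
    intro x
    have := congrArg (starRingEnd ℂ) (h0 (-x))
    rw [paperFourierP, ← integral_conj, map_zero] at this
    rw [paperFourierP, ← this]
    refine integral_congr_ae (Filter.Eventually.of_forall fun b => ?_)
    simp only [map_mul, ← Complex.exp_conj, Complex.conj_I, Complex.conj_ofReal]
    simp
  have hci : Integrable (fun b => (starRingEnd ℂ) (h b)) :=
    (Complex.conjCLE.toContinuousLinearMap.integrable_comp hi : _)
  have hre := fourier_unique_real hi.re (fun x => by
    have : paperFourierP p (fun b => ((RCLike.re (h b) : ℝ) : ℂ)) x =
        (1/2) * (paperFourierP p h x + paperFourierP p (fun b => (starRingEnd ℂ) (h b)) x) := by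
      unfold paperFourierP
      rw [← integral_add (char_mul_integrable hi x) (char_mul_integrable hci x),
        ← integral_const_mul]
      refine integral_congr_ae (Filter.Eventually.of_forall fun b => ?_)
      simp only [RCLike.re_eq_complex_re, Complex.re_eq_add_conj]; ring
    rw [this, h0, hconj]; simp)
  have him := fourier_unique_real hi.im (fun x => by
    have : paperFourierP p (fun b => ((RCLike.im (h b) : ℝ) : ℂ)) x =
        (1/(2*Complex.I)) *
          (paperFourierP p h x - paperFourierP p (fun b => (starRingEnd ℂ) (h b)) x) := by
      unfold paperFourierP
      rw [← integral_sub (char_mul_integrable hi x) (char_mul_integrable hci x),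
        ← integral_const_mul]
      refine integral_congr_ae (Filter.Eventually.of_forall fun b => ?_)
      simp only [RCLike.im_eq_complex_im, Complex.im_eq_sub_conj]; ring
    rw [this, h0, hconj]; simp)
  filter_upwards [hre, him] with b h1 h2
  exact Complex.ext h1 h2

/-- One-dimensional analytic continuation along a line. -/
lemma fourier_line_zero {p : ℕ} {δ : ℝ} (hδ : 0 < δ) {h : (Fin p → ℝ) → ℂ}
    (hm : AEStronglyMeasurable h volume)
    (hi : Integrable (fun b => Real.exp (δ * absSum b) * ‖h b‖)) (x : Fin p → ℝ)
    (h0 : ∀ᶠ t : ℝ in nhds 0, paperFourierP p h (t • x) = 0) : paperFourierP p h x = 0 := by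
  set M : ℝ := 1 + ∑ j, |x j| with hM
  have hM0 : 0 < M := by
    have : 0 ≤ ∑ j, |x j| := Finset.sum_nonneg fun _ _ => abs_nonneg _
    linarith
  set η : ℝ := δ / (2 * M) with hη
  have hη0 : 0 < η := by positivity
  set X : (Fin p → ℝ) → ℝ := fun b => ∑ j, b j * x j with hX
  have hXc : Continuous X := by fun_prop
  have hXb : ∀ b, |X b| ≤ M * absSum b := fun b => abs_dot_le b x
  set G : ℂ → (Fin p → ℝ) → ℂ := fun z b => Complex.exp (Complex.I * z * X b) * h b with hG
  set G' : ℂ → (Fin p → ℝ) → ℂ :=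
    fun z b => (Complex.exp (Complex.I * z * X b) * (Complex.I * X b)) * h b with hG'
  set S : Set ℂ := {z | -η < z.im ∧ z.im < η} with hS
  have hSo : IsOpen S :=
    (isOpen_lt continuous_const Complex.continuous_im).inter
      (isOpen_lt Complex.continuous_im continuous_const)
  have hSc : IsPreconnected S := by
    refine Convex.isPreconnected ?_
    exact (convex_halfSpace_im_gt (-η)).inter (convex_halfSpace_im_lt η)
  have hexp : ∀ z ∈ S, ∀ b, ‖Complex.exp (Complex.I * z * X b)‖ ≤
      Real.exp (δ / 2 * absSum b) := by
    intro z hz b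
    rw [Complex.norm_exp, Real.exp_le_exp]
    have e : (Complex.I * z * X b).re = -(z.im * X b) := by simp
    rw [e]
    have h1 : |z.im| ≤ η := abs_le.2 ⟨hz.1.le, hz.2.le⟩
    calc -(z.im * X b) ≤ |z.im * X b| := neg_le_abs _
      _ = |z.im| * |X b| := abs_mul _ _
      _ ≤ η * (M * absSum b) := mul_le_mul h1 (hXb b) (abs_nonneg _) hη0.le
      _ = δ / 2 * absSum b := by rw [hη]; field_simp
  have hGm : ∀ z, AEStronglyMeasurable (G z) volume := fun z =>
    (Continuous.aestronglyMeasurable (by fun_prop)).mul hm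
  have hG'm : ∀ z, AEStronglyMeasurable (G' z) volume := fun z =>
    (Continuous.aestronglyMeasurable (by fun_prop)).mul hm
  have hdiff : ∀ z ∈ S, HasDerivAt (fun z => ∫ b, G z b) (∫ b, G' z b) z := by
    intro z hz
    refine (hasDerivAt_integral_of_dominated_loc_of_deriv_le (s := S)
      (bound := fun b => (2 * M / δ) * (Real.exp (δ * absSum b) * ‖h b‖)) (hSo.mem_nhds hz)
      (Filter.Eventually.of_forall hGm) ?_ (hG'm z) ?_ (hi.const_mul _) ?_).2
    · refine hi.mono' (hGm z) (Filter.Eventually.of_forall fun b => ?_)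
      simp only [hG, norm_mul]
      refine mul_le_mul_of_nonneg_right ((hexp z hz b).trans ?_) (norm_nonneg _)
      rw [Real.exp_le_exp]
      nlinarith [absSum_nonneg b]
    · refine Filter.Eventually.of_forall fun b w hw => ?_
      simp only [hG', norm_mul, Complex.norm_I, one_mul, Complex.norm_real, Real.norm_eq_abs]
      rw [← mul_assoc]
      refine mul_le_mul_of_nonneg_right ?_ (norm_nonneg _)
      have h1 := Real.add_one_le_exp (δ / 2 * absSum b)
      have h2 : |X b| ≤ 2 * M / δ * Real.exp (δ / 2 * absSum b) := by
        refine (hXb b).trans ?_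
        calc M * absSum b = 2 * M / δ * (δ / 2 * absSum b) := by field_simp
          _ ≤ _ := mul_le_mul_of_nonneg_left (by linarith) (by positivity)
      have h3 : Real.exp (δ * absSum b) =
          Real.exp (δ / 2 * absSum b) * Real.exp (δ / 2 * absSum b) := by
        rw [← Real.exp_add]; congr 1; ring
      rw [h3]
      calc _ ≤ Real.exp (δ / 2 * absSum b) * (2 * M / δ * Real.exp (δ / 2 * absSum b)) :=
            mul_le_mul (hexp w hw b) h2 (abs_nonneg _) (Real.exp_pos _).le
        _ = _ := by ring
    · refine Filter.Eventually.of_forall fun b w hw => ?_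
      have e1 : HasDerivAt (fun z : ℂ => Complex.I * z * X b) (Complex.I * X b) w := by
        simpa using ((hasDerivAt_id w).const_mul Complex.I).mul_const (X b : ℂ)
      exact e1.cexp.mul_const (h b)
  have han : AnalyticOnNhd ℂ (fun z => ∫ b, G z b) S :=
    DifferentiableOn.analyticOnNhd
      (fun z hz => (hdiff z hz).differentiableAt.differentiableWithinAt) hSo
  have hreal : ∀ t : ℝ, ∫ b, G t b = paperFourierP p h (t • x) := by
    intro t
    refine integral_congr_ae (Filter.Eventually.of_forall fun b => ?_)
    simp only [hG, hX]
    congr 2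
    rw [mul_assoc, ← Complex.ofReal_mul, Finset.mul_sum]
    congr 2
    refine Finset.sum_congr rfl fun j _ => ?_
    simp only [Pi.smul_apply, smul_eq_mul]; ring
  have hreS : ∀ t : ℝ, (t : ℂ) ∈ S := fun t => by simp [hS, hη0]
  have hfreq : ∃ᶠ z in nhdsWithin (0:ℂ) {0}ᶜ, (fun z => ∫ b, G z b) z = 0 := by
    have ht : Filter.Tendsto (fun t : ℝ => (t : ℂ)) (nhdsWithin 0 {0}ᶜ) (nhdsWithin (0:ℂ) {0}ᶜ) := by
      refine tendsto_nhdsWithin_iff.2 ⟨?_, ?_⟩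
      · have := Complex.continuous_ofReal.tendsto 0
        rw [Complex.ofReal_zero] at this
        exact this.mono_left nhdsWithin_le_nhds
      · filter_upwards [self_mem_nhdsWithin] with t ht
        simpa using ht
    refine ht.frequently (Filter.Eventually.frequently ?_)
    filter_upwards [nhdsWithin_le_nhds h0] with t ht
    simp only [hreal t, ht]
  have := han.eqOn_zero_of_preconnected_of_frequently_eq_zero hSc
    (by simpa using hreS 0) hfreq (hreS 1)
  simp only [hreal 1, one_smul] at this
  exact this

lemma core_injective {p : ℕ} {δ : ℝ} (hδ : 0 < δ) {h : (Fin p → ℝ) → ℂ}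
    (hm : AEStronglyMeasurable h volume)
    (hi : Integrable (fun b => Real.exp (δ * absSum b) * ‖h b‖)) {c r : ℝ} (hc : c ≠ 0)
    (hr : 0 < r)
    (h0 : ∀ᵐ u ∂(volume.restrict (Set.pi Set.univ (fun _ : Fin p => Set.Icc (-r : ℝ) r))),
          paperFourierP p h (c • u) = 0) : h =ᵐ[volume] 0 := by
  have hint := integrable_of_exp hδ hm hi
  refine fourier_unique hint fun x => fourier_line_zero hδ hm hi x ?_
  set U : Set (Fin p → ℝ) := Set.pi Set.univ (fun _ : Fin p => Set.Ioo (-r : ℝ) r) with hU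
  have hUo : IsOpen U := isOpen_set_pi Set.finite_univ fun _ _ => isOpen_Ioo
  have hUs : U ⊆ Set.pi Set.univ (fun _ : Fin p => Set.Icc (-r : ℝ) r) :=
    Set.pi_mono fun _ _ => Ioo_subset_Icc_self
  have hcont : Continuous fun u : Fin p → ℝ => paperFourierP p h (c • u) :=
    (paperFourierP_continuous hint).comp (continuous_const_smul c)
  have heq := Measure.eqOn_open_of_ae_eq (μ := (volume : Measure (Fin p → ℝ)))
    (f := fun u => paperFourierP p h (c • u)) (g := fun _ => 0)
    (ae_restrict_of_ae_restrict_of_subset hUs h0) hUo hcont.continuousOn continuousOn_const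
  have hU0 : (0 : Fin p → ℝ) ∈ U := by simp [hU, hr]
  have ht : Filter.Tendsto (fun t : ℝ => (t / c) • x) (nhds 0) (nhds 0) := by
    have : Continuous fun t : ℝ => (t / c) • x := by fun_prop
    simpa using this.tendsto 0
  filter_upwards [ht.eventually (hUo.mem_nhds hU0)] with t htU
  have := heq htU
  simp only [smul_smul] at this
  rwa [mul_div_cancel₀ _ hc] at this

lemma fourier_swap {p : ℕ} {k h : (Fin p → ℝ) → ℂ} (hk : Integrable k) (hh : Integrable h)
    (c : ℝ) : ∫ u, paperFourierP p k (c • u) * h u = ∫ b, k b * paperFourierP p h (c • b) := by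
  have hprod : Integrable (fun z : (Fin p → ℝ) × (Fin p → ℝ) =>
      Complex.exp (Complex.I * ((∑ j, z.2 j * (c • z.1) j : ℝ) : ℂ)) * (h z.1 * k z.2))
      (volume.prod volume) := by
    refine (hh.mul_prod hk).bdd_mul (c := 1) (Continuous.aestronglyMeasurable ?_)
      (Filter.Eventually.of_forall fun z => (norm_char z.2 (c • z.1)).le)
    simp only [Pi.smul_apply, smul_eq_mul]
    fun_prop
  have := integral_integral_swap (f := fun u b : Fin p → ℝ =>
    Complex.exp (Complex.I * ((∑ j, b j * (c • u) j : ℝ) : ℂ)) * (h u * k b)) hprod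
  calc _ = ∫ u, ∫ b, Complex.exp (Complex.I * ((∑ j, b j * (c • u) j : ℝ) : ℂ)) * (h u * k b) := by
        refine integral_congr_ae (Filter.Eventually.of_forall fun u => ?_)
        simp only [paperFourierP]
        rw [← integral_mul_const]
        refine integral_congr_ae (Filter.Eventually.of_forall fun b => ?_)
        simp only []; ring
    _ = _ := this
    _ = _ := by
        refine integral_congr_ae (Filter.Eventually.of_forall fun b => ?_)
        simp only [paperFourierP]
        rw [← integral_const_mul]
        refine integral_congr_ae (Filter.Eventually.of_forall fun u => ?_)
        have e : ∑ j, b j * (c • u) j = ∑ j, u j * (c • b) j :=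
          Finset.sum_congr rfl fun j _ => by simp only [Pi.smul_apply, smul_eq_mul]; ring
        simp only [e]; ring

/-- The closed box `[-r,r]^p`. -/
def cbox (p : ℕ) (r : ℝ) : Set (Fin p → ℝ) :=
  Set.pi Set.univ (fun _ : Fin p => Set.Icc (-r : ℝ) r)

lemma isCompact_cbox (p : ℕ) (r : ℝ) : IsCompact (cbox p r) :=
  isCompact_univ_pi fun _ => isCompact_Icc

lemma measurableSet_cbox (p : ℕ) (r : ℝ) : MeasurableSet (cbox p r) :=
  (isCompact_cbox p r).measurableSet

/-- Bounded measurable functions supported in the box. -/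
def NiceFun (p : ℕ) (R : ℝ) (f : (Fin p → ℝ) → ℂ) : Prop :=
  AEStronglyMeasurable f volume ∧ (∃ C : ℝ, ∀ b, ‖f b‖ ≤ C) ∧ ∀ b, b ∉ cbox p R → f b = 0

lemma NiceFun.integrable {p : ℕ} {R : ℝ} {f : (Fin p → ℝ) → ℂ} (hf : NiceFun p R f) :
    Integrable f := by
  obtain ⟨hm, ⟨C, hC⟩, hs⟩ := hf
  have hI : IntegrableOn f (cbox p R) :=
    Measure.integrableOn_of_bounded (M := C) (isCompact_cbox p R).measure_lt_top.ne hm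
      (Filter.Eventually.of_forall hC)
  have := hI.integrable_indicator (measurableSet_cbox p R)
  rwa [Set.indicator_eq_self.2 (fun b hb => by_contra fun h => hb (hs b h))] at this

lemma weight_upper {R : ℝ} (hR : 0 < R) {W : ℝ → ℝ≥0∞} (hW : W = boxWeight R ∨ W = coshWeight R)
    {x : ℝ} (hx : x ∈ Set.Icc (-R) R) : W x ≤ ENNReal.ofReal (Real.cosh 1) := by
  have h : |x| ≤ R := abs_le.2 hx
  rcases hW with rfl | rfl
  · rw [boxWeight, if_pos h, ENNReal.one_le_ofReal]; exact Real.one_le_cosh 1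
  · apply ENNReal.ofReal_le_ofReal
    rw [Real.cosh_le_cosh, abs_div, abs_of_pos hR, abs_one, div_le_one hR]; exact h

lemma NiceFun.weighted {p : ℕ} {R : ℝ} (hR : 0 < R) {W : ℝ → ℝ≥0∞}
    (hW : W = boxWeight R ∨ W = coshWeight R) {f : (Fin p → ℝ) → ℂ} (hf : NiceFun p R f) :
    (∫⁻ b : Fin p → ℝ, (‖f b‖₊ : ℝ≥0∞) ^ 2 * ∏ j, W (b j)) < ⊤ := by
  obtain ⟨hm, ⟨C, hC⟩, hs⟩ := hf
  set K : ℝ≥0∞ := ENNReal.ofReal C ^ 2 * ENNReal.ofReal (Real.cosh 1) ^ p with hK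
  have hKt : K ≠ ⊤ := by
    rw [hK]; exact ENNReal.mul_ne_top (by simp) (by simp)
  have key : ∀ b : Fin p → ℝ, (‖f b‖₊ : ℝ≥0∞) ^ 2 * ∏ j, W (b j) ≤
      (cbox p R).indicator (fun _ => K) b := by
    intro b
    by_cases hb : b ∈ cbox p R
    · rw [Set.indicator_of_mem hb]
      refine mul_le_mul' ?_ ?_
      · gcongr
        have : (‖f b‖₊ : ℝ≥0∞) = ENNReal.ofReal ‖f b‖ := by rw [ofReal_norm]; rfl
        rw [this]
        exact ENNReal.ofReal_le_ofReal (hC b)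
      · calc _ ≤ ∏ _j : Fin p, ENNReal.ofReal (Real.cosh 1) :=
              Finset.prod_le_prod' fun j _ => weight_upper hR hW (hb j (Set.mem_univ j))
          _ = _ := by simp
    · simp [hs b hb]
  refine (lintegral_mono key).trans_lt ?_
  rw [lintegral_indicator_const (measurableSet_cbox p R)]
  exact ENNReal.mul_lt_top hKt.lt_top (isCompact_cbox p R).measure_lt_top

/-- The submodule of Fourier images of nice functions. -/
noncomputable def niceRange (p : ℕ) (R c : ℝ) :
    Submodule ℂ (Lp ℂ 2 (volume.restrict (cbox p 1))) where
  carrier := {g | ∃ f : (Fin p → ℝ) → ℂ, NiceFun p R f ∧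
    ⇑g =ᵐ[volume.restrict (cbox p 1)] fun u => paperFourierP p f (c • u)}
  zero_mem' := by
    refine ⟨0, ⟨aestronglyMeasurable_zero, ⟨0, by simp⟩, by simp⟩, ?_⟩
    filter_upwards [Lp.coeFn_zero ℂ 2 (volume.restrict (cbox p 1))] with u hu
    rw [hu]; simp [paperFourierP]
  add_mem' := by
    rintro g1 g2 ⟨f1, hf1, h1⟩ ⟨f2, hf2, h2⟩
    refine ⟨f1 + f2, ⟨hf1.1.add hf2.1, ?_, fun b hb => ?_⟩, ?_⟩
    · obtain ⟨C1, hC1⟩ := hf1.2.1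
      obtain ⟨C2, hC2⟩ := hf2.2.1
      exact ⟨C1 + C2, fun b => (norm_add_le _ _).trans (add_le_add (hC1 b) (hC2 b))⟩
    · simp [hf1.2.2 b hb, hf2.2.2 b hb]
    · filter_upwards [Lp.coeFn_add g1 g2, h1, h2] with u hu e1 e2
      rw [hu, Pi.add_apply, e1, e2]
      unfold paperFourierP
      rw [← integral_add (char_mul_integrable hf1.integrable _)
        (char_mul_integrable hf2.integrable _)]
      simp only [Pi.add_apply, mul_add]
  smul_mem' := by
    rintro a g ⟨f, hf, h⟩
    refine ⟨a • f, ⟨hf.1.const_smul a, ?_, fun b hb => ?_⟩, ?_⟩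
    · obtain ⟨C, hC⟩ := hf.2.1
      refine ⟨‖a‖ * C, fun b => ?_⟩
      rw [Pi.smul_apply, norm_smul]
      exact mul_le_mul_of_nonneg_left (hC b) (norm_nonneg _)
    · simp [hf.2.2 b hb]
    · filter_upwards [Lp.coeFn_smul a g, h] with u hu e
      rw [hu, Pi.smul_apply, e, smul_eq_mul]
      unfold paperFourierP
      rw [← integral_const_mul]
      simp only [Pi.smul_apply, smul_eq_mul, mul_left_comm]

lemma niceRange_orthogonal (p : ℕ) {R c : ℝ} (hR : 0 < R) (hc : c ≠ 0) :
    (niceRange p R c)ᗮ = ⊥ := by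
  rw [Submodule.eq_bot_iff]
  intro g hg
  have : IsFiniteMeasure (volume.restrict (cbox p 1)) :=
    ⟨by rw [Measure.restrict_apply_univ]; exact (isCompact_cbox p 1).measure_lt_top⟩
  have hQ := measurableSet_cbox p 1
  set h : (Fin p → ℝ) → ℂ := (cbox p 1).indicator (fun u => (starRingEnd ℂ) (g u)) with hh
  have hgi : Integrable g (volume.restrict (cbox p 1)) := (Lp.memLp g).integrable (by norm_num)
  have hci : IntegrableOn (fun u => (starRingEnd ℂ) (g u)) (cbox p 1) :=
    (Complex.conjCLE.toContinuousLinearMap.integrable_comp hgi : _)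
  have hhi : Integrable h := hci.integrable_indicator hQ
  have hexp : Integrable (fun b => Real.exp (1 * absSum b) * ‖h b‖) := by
    refine (hhi.norm.const_mul (Real.exp p)).mono'
      ((by have := continuous_absSum (p := p); fun_prop : Continuous fun b : Fin p → ℝ =>
        Real.exp (1 * absSum b)).aestronglyMeasurable.mul hhi.1.norm)
      (Filter.Eventually.of_forall fun b => ?_)
    rw [Real.norm_of_nonneg (by positivity)]
    by_cases hb : b ∈ cbox p 1
    · refine mul_le_mul_of_nonneg_right ?_ (norm_nonneg _)
      rw [Real.exp_le_exp, one_mul]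
      calc absSum b ≤ ∑ _j : Fin p, (1:ℝ) :=
            Finset.sum_le_sum fun j _ => abs_le.2 (hb j (Set.mem_univ j))
        _ = p := by simp
    · rw [hh, Set.indicator_of_notMem hb]; simp
  set G : (Fin p → ℝ) → ℂ := fun b => paperFourierP p h (c • b) with hG
  have hGc : Continuous G := (paperFourierP_continuous hhi).comp (continuous_const_smul c)
  set k : (Fin p → ℝ) → ℂ := (cbox p R).indicator (fun b => (starRingEnd ℂ) (G b)) with hk
  have hnice : NiceFun p R k := by
    refine ⟨(Continuous.aestronglyMeasurable (by fun_prop)).indicator (measurableSet_cbox p R),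
      ⟨∫ b, ‖h b‖, fun b => ?_⟩, fun b hb => Set.indicator_of_notMem hb _⟩
    refine (norm_indicator_le_norm_self _ _).trans ?_
    rw [RCLike.norm_conj]
    exact norm_paperFourierP_le h _
  have hki := hnice.integrable
  have hmem : MemLp (fun u => paperFourierP p k (c • u)) 2 (volume.restrict (cbox p 1)) :=
    MemLp.of_bound ((paperFourierP_continuous hki).comp
      (continuous_const_smul c)).aestronglyMeasurable (∫ b, ‖k b‖)
      (Filter.Eventually.of_forall fun u => norm_paperFourierP_le k _)
  have horth := (Submodule.mem_orthogonal' _ g).1 hg (hmem.toLp _) ⟨k, hnice, hmem.coeFn_toLp⟩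
  rw [L2.inner_def] at horth
  have h1 : ∫ u, paperFourierP p k (c • u) * h u = 0 := by
    rw [← horth, ← integral_indicator hQ]
    have hae := (ae_restrict_iff' hQ).1 hmem.coeFn_toLp
    refine integral_congr_ae ?_
    filter_upwards [hae] with u hu
    by_cases hb : u ∈ cbox p 1
    · rw [Set.indicator_of_mem hb, hh, Set.indicator_of_mem hb, hu hb, RCLike.inner_apply]
    · rw [Set.indicator_of_notMem hb, hh, Set.indicator_of_notMem hb, mul_zero]
  rw [fourier_swap hki hhi c] at h1
  have h2 : ∫ b in cbox p R, ‖G b‖ ^ 2 = 0 := by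
    have : ((∫ b in cbox p R, ‖G b‖ ^ 2 : ℝ) : ℂ) = 0 := by
      rw [← h1, ← integral_complex_ofReal, ← integral_indicator (measurableSet_cbox p R)]
      refine integral_congr_ae (Filter.Eventually.of_forall fun b => ?_)
      simp only [hk]
      by_cases hb : b ∈ cbox p R
      · rw [Set.indicator_of_mem hb, Set.indicator_of_mem hb, RCLike.conj_mul]; simp
      · rw [Set.indicator_of_notMem hb, Set.indicator_of_notMem hb, zero_mul]
    exact_mod_cast this
  have h3 : ∀ᵐ b ∂(volume.restrict (cbox p R)), G b = 0 := by
    have := (integral_eq_zero_iff_of_nonneg (fun b => by positivity)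
      ((by fun_prop : Continuous fun b => ‖G b‖ ^ 2).continuousOn.integrableOn_compact
        (isCompact_cbox p R))).1 h2
    filter_upwards [this] with b hb
    simpa using hb
  have h4 : h =ᵐ[volume] 0 := core_injective one_pos hhi.1 hexp hc hR h3
  refine (Lp.eq_zero_iff_ae_eq_zero).2 ?_
  refine (ae_restrict_iff' hQ).2 ?_
  filter_upwards [h4] with u hu hb
  rw [hh, Set.indicator_of_mem hb] at hu
  simpa using hu

/-- Proposition 2 of the paper: for both weights `W`, the truncated Fourier operator
`𝓕_c : L²(W^{⊗p}) → L²([-1,1]^p)`, `f ↦ 𝓕[f](c ·)|_{[-1,1]^p}`, is injective and has dense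
range: the closure in `L²([-1,1]^p)` of its image is the whole space.  (This is equivalent to
completeness of the two orthonormal systems of singular functions of `𝓕_c`.) -/
theorem truncated_fourier_injective_dense_range
    (p : ℕ) (R c : ℝ) (hR : 0 < R) (hc : c ≠ 0)
    (W : ℝ → ℝ≥0∞) (hW : W = boxWeight R ∨ W = coshWeight R) :
    (∀ f : (Fin p → ℝ) → ℂ, AEStronglyMeasurable f volume →
        (∫⁻ b : Fin p → ℝ, (‖f b‖₊ : ℝ≥0∞) ^ 2 * ∏ j, W (b j)) < ⊤ →
        (∀ᵐ u ∂(volume.restrict (Set.pi Set.univ (fun _ : Fin p => Set.Icc (-1 : ℝ) 1))),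
          paperFourierP p f (c • u) = 0) →
        f =ᵐ[volume] 0) ∧
      Dense {g : Lp ℂ 2
          (volume.restrict (Set.pi Set.univ (fun _ : Fin p => Set.Icc (-1 : ℝ) 1))) |
        ∃ f : (Fin p → ℝ) → ℂ, AEStronglyMeasurable f volume ∧
          (∫⁻ b : Fin p → ℝ, (‖f b‖₊ : ℝ≥0∞) ^ 2 * ∏ j, W (b j)) < ⊤ ∧
          ⇑g =ᵐ[volume.restrict (Set.pi Set.univ (fun _ : Fin p => Set.Icc (-1 : ℝ) 1))]
            fun u => paperFourierP p f (c • u)} := by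
  refine ⟨fun f hf hfi h0 => ?_, ?_⟩
  · exact core_injective (by positivity) hf (expWeight_integrable hR hW hf hfi) hc one_pos h0
  · have hd : Dense (niceRange p R c : Set (Lp ℂ 2 (volume.restrict (cbox p 1)))) := by
      rw [Submodule.dense_iff_topologicalClosure_eq_top, Submodule.topologicalClosure_eq_top_iff]
      exact niceRange_orthogonal p hR hc
    refine hd.mono ?_
    rintro g ⟨f, hf, hg⟩
    exact ⟨f, hf.1, hf.weighted hR hW, hg⟩
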